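/- arXiv:1809.09842 — 6 statements merged into one kernel-verified Lean document; each statement's English description precedes it below -/
import Mathlib

section
/- Let V be an m × n real matrix, μ ∈ ℝ^m, and let v ∈ ℝ^n with v_k ≥ 0 for all k and V v = μ, and c ∈ ℝ^n with V c = 0. (i) If c has a strictly positive entry, set α_1 = min{ v_k / c_k : c_k > 0 }; then V (v − α_1 c) = μ, every entry of v − α_1 c is nonnegative, and (v − α_1 c)_{k_1} = 0 for any index k_1 attaining the minimum. (ii) If c has a strictly negative entry, set α_2 = max{ v_k / c_k : c_k < 0 }; then V (v − α_2 c) = μ, every entry of v − α_2 c is nonnegative, and (v − α_2 c)_{k_2} = 0 for any index k_2 attaining the maximum. -/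
theorem mulVec_sub_smul_of_mulVec_eq_zero {R S ι κ : Type*} [NonUnitalNonAssocRing S]
    [DistribSMul R S] [SMulCommClass R S S] [Fintype κ] {V : Matrix ι κ S} {c : κ → S}
    (hc : V.mulVec c = 0) (v : κ → S) (a : R) : V.mulVec (v - a • c) = V.mulVec v := by
  rw [Matrix.mulVec_sub, Matrix.mulVec_smul, hc, smul_zero, sub_zero]

section OrderedField

variable {K : Type*} [Field K] [LinearOrder K] [IsStrictOrderedRing K]

theorem mul_le_of_nonneg_of_pos_imp_le_div {a x y : K} (hx : 0 ≤ x) (ha : 0 ≤ a)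
    (h : 0 < y → a ≤ x / y) : a * y ≤ x := by
  obtain hy | hy := lt_or_ge 0 y
  · exact (le_div_iff₀ hy).1 (h hy)
  · exact (mul_nonpos_of_nonneg_of_nonpos ha hy).trans hx

theorem mul_le_of_nonpos_of_neg_imp_div_le {a x y : K} (hx : 0 ≤ x) (ha : a ≤ 0)
    (h : y < 0 → x / y ≤ a) : a * y ≤ x := by
  rw [← neg_mul_neg]
  refine mul_le_of_nonneg_of_pos_imp_le_div hx (neg_nonneg.2 ha) fun hy ↦ ?_
  rw [div_neg]
  exact neg_le_neg (h (neg_pos.1 hy))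

variable {κ : Type*} {s : Finset κ} {v c : κ → K}

theorem sub_inf'_div_mul_nonneg (hv : ∀ k ∈ s, 0 ≤ v k)
    (hpos : (s.filter fun k ↦ 0 < c k).Nonempty) {k : κ} (hk : k ∈ s) :
    0 ≤ v k - (s.filter fun k ↦ 0 < c k).inf' hpos (fun k ↦ v k / c k) * c k := by
  refine sub_nonneg.2 (mul_le_of_nonneg_of_pos_imp_le_div (hv k hk) ?_ fun hck ↦ ?_)
  · refine Finset.le_inf' _ _ fun j hj ↦ ?_
    obtain ⟨hjs, hcj⟩ := Finset.mem_filter.1 hj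
    exact div_nonneg (hv j hjs) hcj.le
  · exact Finset.inf'_le (fun k ↦ v k / c k) (Finset.mem_filter.2 ⟨hk, hck⟩)

theorem sub_sup'_div_mul_nonneg (hv : ∀ k ∈ s, 0 ≤ v k)
    (hneg : (s.filter fun k ↦ c k < 0).Nonempty) {k : κ} (hk : k ∈ s) :
    0 ≤ v k - (s.filter fun k ↦ c k < 0).sup' hneg (fun k ↦ v k / c k) * c k := by
  refine sub_nonneg.2 (mul_le_of_nonpos_of_neg_imp_div_le (hv k hk) ?_ fun hck ↦ ?_)
  · refine Finset.sup'_le _ _ fun j hj ↦ ?_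
    obtain ⟨hjs, hcj⟩ := Finset.mem_filter.1 hj
    exact div_nonpos_of_nonneg_of_nonpos (hv j hjs) hcj.le
  · exact Finset.le_sup' (fun k ↦ v k / c k) (Finset.mem_filter.2 ⟨hk, hck⟩)

end OrderedField

theorem node_removal_step_general {K ι κ : Type*} [Field K] [LinearOrder K]
    [IsStrictOrderedRing K] [Fintype κ] (V : Matrix ι κ K) (μ : ι → K)
    (v : κ → K) (hv : ∀ k, 0 ≤ v k) (hVv : V.mulVec v = μ)
    (c : κ → K) (hc : V.mulVec c = 0) :
    (∀ (hpos : (Finset.univ.filter fun k => 0 < c k).Nonempty) (α₁ : K),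
        α₁ = (Finset.univ.filter fun k => 0 < c k).inf' hpos (fun k => v k / c k) →
        V.mulVec (v - α₁ • c) = μ ∧ (∀ k, 0 ≤ v k - α₁ * c k) ∧
        ∀ k₁, 0 < c k₁ → v k₁ / c k₁ = α₁ → v k₁ - α₁ * c k₁ = 0) ∧
    (∀ (hneg : (Finset.univ.filter fun k => c k < 0).Nonempty) (α₂ : K),
        α₂ = (Finset.univ.filter fun k => c k < 0).sup' hneg (fun k => v k / c k) →
        V.mulVec (v - α₂ • c) = μ ∧ (∀ k, 0 ≤ v k - α₂ * c k) ∧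
        ∀ k₂, c k₂ < 0 → v k₂ / c k₂ = α₂ → v k₂ - α₂ * c k₂ = 0) := by
  have exactness (a : K) : V.mulVec (v - a • c) = μ :=
    (mulVec_sub_smul_of_mulVec_eq_zero hc v a).trans hVv
  have annihilation {a : K} {k : κ} (hk : c k ≠ 0) (h : v k / c k = a) : v k - a * c k = 0 :=
    sub_eq_zero.2 ((div_eq_iff hk).1 h)
  refine ⟨fun hpos α₁ hα₁ ↦ ⟨exactness α₁, fun k ↦ ?_, fun _ hk ↦ annihilation hk.ne'⟩,
    fun hneg α₂ hα₂ ↦ ⟨exactness α₂, fun k ↦ ?_, fun _ hk ↦ annihilation hk.ne⟩⟩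
  · rw [hα₁]
    exact sub_inf'_div_mul_nonneg (fun k _ ↦ hv k) hpos (Finset.mem_univ k)
  · rw [hα₂]
    exact sub_sup'_div_mul_nonneg (fun k _ ↦ hv k) hneg (Finset.mem_univ k)

/-- Node-removal step of the implicit quadrature rule: let `v` be nonnegative weights with
`V v = μ` and let `c` be a null vector of `V`. (i) If `c` has a positive entry, subtracting
`α₁ • c` with `α₁ = min { v k / c k : c k > 0 }` preserves exactness and nonnegativity and
annihilates every weight attaining the minimum. (ii) Symmetrically for
`α₂ = max { v k / c k : c k < 0 }`. -/
theorem node_removal_step {m n : ℕ} (V : Matrix (Fin m) (Fin n) ℝ) (μ : Fin m → ℝ)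
    (v : Fin n → ℝ) (hv : ∀ k, 0 ≤ v k) (hVv : V.mulVec v = μ)
    (c : Fin n → ℝ) (hc : V.mulVec c = 0) :
    (∀ (hpos : (Finset.univ.filter fun k => 0 < c k).Nonempty) (α₁ : ℝ),
        α₁ = (Finset.univ.filter fun k => 0 < c k).inf' hpos (fun k => v k / c k) →
        V.mulVec (v - α₁ • c) = μ ∧ (∀ k, 0 ≤ v k - α₁ * c k) ∧
        ∀ k₁, 0 < c k₁ → v k₁ / c k₁ = α₁ → v k₁ - α₁ * c k₁ = 0) ∧
    (∀ (hneg : (Finset.univ.filter fun k => c k < 0).Nonempty) (α₂ : ℝ),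
        α₂ = (Finset.univ.filter fun k => c k < 0).sup' hneg (fun k => v k / c k) →
        V.mulVec (v - α₂ • c) = μ ∧ (∀ k, 0 ≤ v k - α₂ * c k) ∧
        ∀ k₂, c k₂ < 0 → v k₂ / c k₂ = α₂ → v k₂ - α₂ * c k₂ = 0) :=
  node_removal_step_general V μ v hv hVv c hc
end

section
/- Let Ω be a set and φ_0,…,φ_D : Ω → ℝ with φ_0 the constant function 1. Let y_0,…,y_{K+1} ∈ Ω be samples and suppose x_0,…,x_D ∈ Ω and nonnegative weights w_0,…,w_D satisfy Σ_{k=0}^D w_k φ_j(x_k) = (1/(K+1)) Σ_{i=0}^K φ_j(y_i) for all j = 0,…,D. Then there exist nonnegative weights v_0,…,v_{D+1} with v_{k_0} = 0 for at least one index k_0, such that, writing x_{D+1} = y_{K+1}, Σ_{k=0}^{D+1} v_k φ_j(x_k) = (1/(K+2)) Σ_{i=0}^{K+1} φ_j(y_i) for all j = 0,…,D. -/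
/-!
Lowering the old weights by the factor `(K + 1) / (K + 2)` and giving the new sample the weight
`1 / (K + 2)` already yields a positive rule for the updated moments, but with one node too many.
The moment vectors at its nodes are then linearly dependent, so the weights can be moved along
a linear relation without changing the moments. Up to sign the relation has a positive
coefficient, and subtracting the largest multiple of it that keeps all weights nonnegative makes
one of them vanish.
-/

section ConicReduction

variable {𝕜 κ : Type*} [Field 𝕜] [LinearOrder 𝕜] [IsStrictOrderedRing 𝕜]

theorem exists_nonneg_sub_smul_apply_eq_zero_of_pos [Finite κ] {u c : κ → 𝕜} (hu : 0 ≤ u)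
    (hc : ∃ k, 0 < c k) : ∃ t : 𝕜, 0 ≤ u - t • c ∧ ∃ k, (u - t • c) k = 0 := by
  obtain ⟨k₀, hk₀ : 0 < c k₀, ratio_min⟩ :=
    Set.exists_min_image {k | 0 < c k} (fun k ↦ u k / c k) (Set.toFinite _) hc
  refine ⟨u k₀ / c k₀, fun k ↦ sub_nonneg.2 ?_, k₀, ?_⟩
  · change u k₀ / c k₀ * c k ≤ u k
    rcases lt_or_ge 0 (c k) with hk | hk
    · exact (le_div_iff₀ hk).1 (ratio_min k hk)
    · exact (mul_nonpos_of_nonneg_of_nonpos (div_nonneg (hu k₀) hk₀.le) hk).trans (hu k)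
  · simp [hk₀.ne']

theorem exists_nonneg_sub_smul_apply_eq_zero [Finite κ] {u c : κ → 𝕜} (hu : 0 ≤ u)
    (hc : c ≠ 0) : ∃ t : 𝕜, 0 ≤ u - t • c ∧ ∃ k, (u - t • c) k = 0 := by
  obtain ⟨k, hk⟩ := Function.ne_iff.1 hc
  rcases lt_or_gt_of_ne hk with hneg | hpos
  · obtain ⟨t, ht⟩ := exists_nonneg_sub_smul_apply_eq_zero_of_pos hu
      (c := -c) ⟨k, neg_pos.2 hneg⟩
    exact ⟨-t, by simpa only [smul_neg, neg_smul] using ht⟩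
  · exact exists_nonneg_sub_smul_apply_eq_zero_of_pos hu ⟨k, hpos⟩

theorem exists_nonneg_apply_eq_zero_sum_smul_eq [Fintype κ] {V : Type*} [AddCommGroup V]
    [Module 𝕜 V] {f : κ → V} (hf : ¬LinearIndependent 𝕜 f) {u : κ → 𝕜} (hu : 0 ≤ u) :
    ∃ v : κ → 𝕜, 0 ≤ v ∧ (∃ k, v k = 0) ∧ ∑ k, v k • f k = ∑ k, u k • f k := by
  obtain ⟨c, relation, hc⟩ := Fintype.not_linearIndependent_iff.1 hf
  obtain ⟨t, nonneg, vanishing⟩ :=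
    exists_nonneg_sub_smul_apply_eq_zero hu (Function.ne_iff.2 hc)
  refine ⟨u - t • c, nonneg, vanishing, ?_⟩
  calc ∑ k, (u - t • c) k • f k
      = ∑ k, u k • f k - t • ∑ k, c k • f k := by
        simp only [Pi.sub_apply, Pi.smul_apply, smul_eq_mul, sub_smul, mul_smul,
          Finset.sum_sub_distrib, Finset.smul_sum]
    _ = ∑ k, u k • f k := by rw [relation, smul_zero, sub_zero]

end ConicReduction

theorem sum_snoc_smul_snoc {R Ω V : Type*} [Semiring R] [AddCommMonoid V] [Module R V] {n : ℕ}
    (Φ : Ω → V) (x : Fin n → Ω) (p : Ω) (w : Fin n → R) (a : R) :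
    ∑ k, (Fin.snoc w a : Fin (n + 1) → R) k • Φ ((Fin.snoc x p : Fin (n + 1) → Ω) k)
      = ∑ k, w k • Φ (x k) + a • Φ p := by
  simp only [Fin.sum_univ_castSucc, Fin.snoc_castSucc, Fin.snoc_last]

section SampleUpdate

variable {𝕜 Ω V : Type*} [Field 𝕜] [LinearOrder 𝕜] [IsStrictOrderedRing 𝕜] [AddCommGroup V]
  [Module 𝕜 V]

theorem exists_nonneg_sum_smul_snoc_eq_sampleMean {n K : ℕ} (Φ : Ω → V) (y : Fin (K + 2) → Ω)
    (x : Fin n → Ω) {w : Fin n → 𝕜} (hw : 0 ≤ w)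
    (h : ∑ k, w k • Φ (x k)
        = (1 / ((K : 𝕜) + 1)) • ∑ i : Fin (K + 1), Φ (y i.castSucc)) :
    ∃ u : Fin (n + 1) → 𝕜, 0 ≤ u ∧
      ∑ k, u k • Φ ((Fin.snoc x (y (Fin.last (K + 1))) : Fin (n + 1) → Ω) k)
        = (1 / ((K : 𝕜) + 2)) • ∑ i, Φ (y i) := by
  set r : 𝕜 := ((K : 𝕜) + 1) / ((K : 𝕜) + 2) with hr
  have r_nonneg : 0 ≤ r := by positivity
  have r_mul : r * (1 / ((K : 𝕜) + 1)) = 1 / ((K : 𝕜) + 2) := by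
    have : (K : 𝕜) + 1 ≠ 0 := by positivity
    rw [hr]
    field_simp
  refine ⟨Fin.snoc (r • w) (1 / ((K : 𝕜) + 2)), fun k ↦ ?_, ?_⟩
  · induction k using Fin.lastCases with
    | last =>
      rw [Fin.snoc_last]
      positivity
    | cast k =>
      rw [Fin.snoc_castSucc]
      exact mul_nonneg r_nonneg (hw k)
  · calc _ = r • ∑ k, w k • Φ (x k) + (1 / ((K : 𝕜) + 2)) • Φ (y (Fin.last (K + 1))) := by
          simp only [sum_snoc_smul_snoc, Pi.smul_apply, smul_assoc, Finset.smul_sum]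
      _ = (1 / ((K : 𝕜) + 2)) • ∑ i, Φ (y i) := by
          rw [h, smul_smul, r_mul, ← smul_add, Fin.sum_univ_castSucc (n := K + 1)]

theorem implicit_rule_iteration_general [Module.Finite 𝕜 V] {n K : ℕ}
    (hn : Module.finrank 𝕜 V ≤ n) (Φ : Ω → V) (y : Fin (K + 2) → Ω) (x : Fin n → Ω)
    {w : Fin n → 𝕜} (hw : 0 ≤ w)
    (h : ∑ k, w k • Φ (x k)
        = (1 / ((K : 𝕜) + 1)) • ∑ i : Fin (K + 1), Φ (y i.castSucc)) :
    ∃ v : Fin (n + 1) → 𝕜, 0 ≤ v ∧ (∃ k₀, v k₀ = 0) ∧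
      ∑ k, v k • Φ ((Fin.snoc x (y (Fin.last (K + 1))) : Fin (n + 1) → Ω) k)
        = (1 / ((K : 𝕜) + 2)) • ∑ i, Φ (y i) := by
  obtain ⟨u, u_nonneg, u_exact⟩ := exists_nonneg_sum_smul_snoc_eq_sampleMean Φ y x hw h
  have dependent : ¬LinearIndependent 𝕜
      fun k ↦ Φ ((Fin.snoc x (y (Fin.last (K + 1))) : Fin (n + 1) → Ω) k) := by
    intro independent
    have card_le := independent.fintype_card_le_finrank
    rw [Fintype.card_fin] at card_le
    omega
  obtain ⟨v, v_nonneg, vanishing, v_eq⟩ :=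
    exists_nonneg_apply_eq_zero_sum_smul_eq dependent u_nonneg
  exact ⟨v, v_nonneg, vanishing, v_eq.trans u_exact⟩

end SampleUpdate

/-- Theorem 3.1 of the paper (one iteration of the implicit quadrature rule): given a
positive quadrature rule with nodes `x 0, …, x D` exact for the moments of the samples
`y 0, …, y K` (with `φ 0 ≡ 1`), there are nonnegative weights `v` on the `D + 2` nodes
obtained by appending the new sample `y (K+1)`, at least one of which vanishes, forming a
rule exact for the moments of the samples `y 0, …, y (K+1)`. -/
theorem implicit_rule_iteration {Ω : Type*} {D K : ℕ}
    (φ : Fin (D + 1) → Ω → ℝ) (hφ0 : ∀ p : Ω, φ 0 p = 1)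
    (y : Fin (K + 2) → Ω) (x : Fin (D + 1) → Ω)
    (w : Fin (D + 1) → ℝ) (hw : ∀ k, 0 ≤ w k)
    (h : ∀ j, ∑ k, w k * φ j (x k)
        = (1 / ((K : ℝ) + 1)) * ∑ i : Fin (K + 1), φ j (y i.castSucc)) :
    ∃ v : Fin (D + 2) → ℝ, (∀ k, 0 ≤ v k) ∧ (∃ k₀, v k₀ = 0) ∧
      ∀ j, ∑ k, v k * φ j ((Fin.snoc x (y (Fin.last (K + 1))) : Fin (D + 2) → Ω) k)
        = (1 / ((K : ℝ) + 2)) * ∑ i, φ j (y i) := by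
  simpa [funext_iff, Pi.le_def] using implicit_rule_iteration_general (w := w)
    (Module.finrank_fin_fun ℝ).le (fun p j ↦ φ j p) y x hw (by ext j; simpa using h j)
end

section
/- Let Ω be a set, let Y ⊆ Ω be a nonempty finite set, and let φ_0,…,φ_D : Ω → ℝ. Then there exists a function w : Y → ℝ with w(y) ≥ 0 for all y ∈ Y, such that the set {y ∈ Y : w(y) ≠ 0} has at most D + 1 elements, and Σ_{y∈Y} w(y) φ_j(y) = (1/|Y|) Σ_{y∈Y} φ_j(y) for every j = 0,…,D. -/
/-!
This is Carathéodory's theorem for cones, applied to the moment vectors `(φ j y)_j`. A nonnegative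
combination `∑ y ∈ Y, w y • v y` with `v` linearly dependent on `Y` can lose a term: pick a linear
relation `g` with a positive coefficient and replace `w` by `w - t • g`, where `t` is the least
ratio `w y / g y` over `g y > 0`. The sum is unchanged, the weights stay nonnegative, and the weight
of a minimizer vanishes. Iterating leaves linearly independent moment vectors, hence at most as many
nodes as there are moments.
-/

section ConicCaratheodory

variable {𝕜 Ω E : Type*} [Field 𝕜] [LinearOrder 𝕜] [IsStrictOrderedRing 𝕜]

lemma exists_nonneg_sub_mul_eq_zero {Y : Finset Ω} {w g : Ω → 𝕜} (hw : ∀ y ∈ Y, 0 ≤ w y)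
    (hg : ∃ y ∈ Y, 0 < g y) :
    ∃ t : 𝕜, (∀ y ∈ Y, 0 ≤ w y - t * g y) ∧ ∃ z ∈ Y, w z - t * g z = 0 := by
  have hpos : (Y.filter (0 < g ·)).Nonempty := Finset.filter_nonempty_iff.2 hg
  obtain ⟨z, hz, hmin⟩ := Finset.exists_min_image _ (fun y => w y / g y) hpos
  obtain ⟨hzY, hgz⟩ := Finset.mem_filter.1 hz
  refine ⟨w z / g z, fun y hy => sub_nonneg.2 ?_, z, hzY,
    sub_eq_zero.2 (div_mul_cancel₀ _ hgz.ne').symm⟩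
  rcases lt_or_ge 0 (g y) with hgy | hgy
  · exact (le_div_iff₀ hgy).1 (hmin y (Finset.mem_filter.2 ⟨hy, hgy⟩))
  · have ht : 0 ≤ w z / g z := div_nonneg (hw z hzY) hgz.le
    exact (mul_nonpos_of_nonneg_of_nonpos ht hgy).trans (hw y hy)

variable [AddCommGroup E] [Module 𝕜 E]

lemma exists_pos_relation_of_not_linearIndepOn {Y : Finset Ω} {v : Ω → E}
    (hv : ¬ LinearIndepOn 𝕜 v (Y : Set Ω)) :
    ∃ g : Ω → 𝕜, (∃ y ∈ Y, 0 < g y) ∧ ∑ y ∈ Y, g y • v y = 0 := by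
  obtain ⟨g, hg, y, hy, hgy⟩ := not_linearIndepOn_finset_iff.1 hv
  rcases hgy.lt_or_gt with hneg | hpos
  · exact ⟨-g, ⟨y, hy, neg_pos.2 hneg⟩, by simp [hg]⟩
  · exact ⟨g, ⟨y, hy, hpos⟩, hg⟩

lemma exists_erase_sum_smul_eq [DecidableEq Ω] {Y : Finset Ω} {v : Ω → E} {w : Ω → 𝕜}
    (hw : ∀ y ∈ Y, 0 ≤ w y) (hv : ¬ LinearIndepOn 𝕜 v (Y : Set Ω)) :
    ∃ z ∈ Y, ∃ u : Ω → 𝕜, (∀ y ∈ Y.erase z, 0 ≤ u y) ∧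
      ∑ y ∈ Y.erase z, u y • v y = ∑ y ∈ Y, w y • v y := by
  obtain ⟨g, hpos, hrel⟩ := exists_pos_relation_of_not_linearIndepOn hv
  obtain ⟨t, hnonneg, z, hz, hzero⟩ := exists_nonneg_sub_mul_eq_zero hw hpos
  refine ⟨z, hz, fun y => w y - t * g y, fun y hy => hnonneg y (Finset.mem_of_mem_erase hy), ?_⟩
  calc ∑ y ∈ Y.erase z, (w y - t * g y) • v y
      = ∑ y ∈ Y, (w y - t * g y) • v y := Finset.sum_erase _ (by rw [hzero, zero_smul])
    _ = ∑ y ∈ Y, w y • v y - t • ∑ y ∈ Y, g y • v y := by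
      simp only [sub_smul, mul_smul, Finset.sum_sub_distrib, Finset.smul_sum]
    _ = ∑ y ∈ Y, w y • v y := by rw [hrel, smul_zero, sub_zero]

theorem exists_linearIndepOn_sum_smul_eq (Y : Finset Ω) (v : Ω → E) {w : Ω → 𝕜}
    (hw : ∀ y ∈ Y, 0 ≤ w y) :
    ∃ S ⊆ Y, LinearIndepOn 𝕜 v (S : Set Ω) ∧ ∃ u : Ω → 𝕜, (∀ y ∈ S, 0 ≤ u y) ∧
      ∑ y ∈ S, u y • v y = ∑ y ∈ Y, w y • v y := by
  classical
  induction Y using Finset.strongInduction generalizing w with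
  | H Y ih =>
    by_cases hv : LinearIndepOn 𝕜 v (Y : Set Ω)
    · exact ⟨Y, subset_rfl, hv, w, hw, rfl⟩
    obtain ⟨z, hz, w', hw', hsum'⟩ := exists_erase_sum_smul_eq hw hv
    obtain ⟨S, hSY, hS, u, hu, hsum⟩ := ih _ (Finset.erase_ssubset hz) hw'
    exact ⟨S, hSY.trans (Finset.erase_subset z Y), hS, u, hu, hsum.trans hsum'⟩

end ConicCaratheodory

open Classical in
theorem discrete_tchakaloff_general {𝕜 Ω ι : Type*} [Field 𝕜] [LinearOrder 𝕜]
    [IsStrictOrderedRing 𝕜] [Fintype ι] (Y : Finset Ω) (φ : ι → Ω → 𝕜) {w : Ω → 𝕜}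
    (hw : ∀ y ∈ Y, 0 ≤ w y) :
    ∃ u : Ω → 𝕜, (∀ y ∈ Y, 0 ≤ u y) ∧
      (Y.filter fun y => u y ≠ 0).card ≤ Fintype.card ι ∧
      ∀ j, ∑ y ∈ Y, u y * φ j y = ∑ y ∈ Y, w y * φ j y := by
  obtain ⟨S, hSY, hS, c, hc, hsum⟩ := exists_linearIndepOn_sum_smul_eq Y (fun y j => φ j y) hw
  have hcard : S.card ≤ Fintype.card ι := by
    simpa using hS.linearIndependent.fintype_card_le_finrank
  refine ⟨fun y => if y ∈ S then c y else 0, fun y _ => ?_, ?_, fun j => ?_⟩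
  · dsimp only
    split_ifs with hy
    exacts [hc y hy, le_rfl]
  · refine (Finset.card_le_card fun y hy => ?_).trans hcard
    exact (ite_ne_right_iff.1 (Finset.mem_filter.1 hy).2).1
  · have hj : ∑ y ∈ S, c y * φ j y = ∑ y ∈ Y, w y * φ j y := by
      simpa only [Finset.sum_apply, Pi.smul_apply, smul_eq_mul] using congrFun hsum j
    simp only [ite_mul, zero_mul, Finset.sum_ite_mem, Finset.inter_eq_right.2 hSY, hj]

open Classical in
/-- Discrete Tchakaloff-type existence result: for any nonempty finite sample set `Y` and
functions `φ 0, …, φ D`, there are nonnegative weights supported on at most `D + 1`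
samples reproducing all `D + 1` sample moments exactly. -/
theorem discrete_tchakaloff {Ω : Type*} (Y : Finset Ω) (hY : Y.Nonempty)
    {D : ℕ} (φ : Fin (D + 1) → Ω → ℝ) :
    ∃ w : Ω → ℝ, (∀ y ∈ Y, 0 ≤ w y) ∧
      (Y.filter fun y => w y ≠ 0).card ≤ D + 1 ∧
      ∀ j, ∑ y ∈ Y, w y * φ j y = (1 / (Y.card : ℝ)) * ∑ y ∈ Y, φ j y := by
  simpa only [Fintype.card_fin, Finset.mul_sum] using
    discrete_tchakaloff_general Y φ (w := fun _ => 1 / (Y.card : ℝ)) fun _ _ => by positivity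
end

section
/- Let x_0,…,x_N be points of a set Ω, φ_0,…,φ_{N−1} : Ω → ℝ, μ_0,…,μ_{N−1} ∈ ℝ, and w ∈ ℝ^{N+1} with Σ_{k=0}^N w_k φ_j(x_k) = μ_j for j = 0,…,N−1. Let c ∈ ℝ^{N+1} satisfy Σ_{k=0}^N c_k φ_j(x_k) = 0 for j = 0,…,N−1, suppose both {k : c_k > 0} and {k : c_k < 0} are nonempty, and suppose w_k ≥ 0 for every k with c_k = 0. Set α_min = max{ w_k / c_k : c_k < 0 } and α_max = min{ w_k / c_k : c_k > 0 }. If α_min ≤ α_max, then there exist α ∈ ℝ and an index k_0 such that the vector w' = w − α c satisfies w'_k ≥ 0 for all k, w'_{k_0} = 0, and Σ_{k=0}^N w'_k φ_j(x_k) = μ_j for j = 0,…,N−1. -/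
/-!
Moving from `w` along the null vector `c` preserves exactness. The `α` for which `w - α • c` is
nonnegative form the interval between the ratios `w k / c k` with `c k < 0` and those with
`0 < c k`. As `c ≠ 0`, this interval has an endpoint; there the weight attaining the extremal ratio
vanishes.
-/

/-- Exactness of a weight vector `w` at the nodes `x` for the basis functions `φ` with moments `μ`.
The null vectors of the Vandermonde matrix `(φ j (x k))` are the exact weights for the moments `0`,
so they need no notion of their own. -/
def IsExactWeight {R Ω ι J : Type*} [Ring R] [Fintype ι]
    (x : ι → Ω) (φ : J → Ω → R) (μ : J → R) (w : ι → R) : Prop :=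
  ∀ j, ∑ k, w k * φ j (x k) = μ j

theorem IsExactWeight.sub_smul {R Ω ι J : Type*} [Ring R] [Fintype ι]
    {x : ι → Ω} {φ : J → Ω → R} {μ : J → R} {w c : ι → R}
    (hw : IsExactWeight x φ μ w) (hc : IsExactWeight x φ 0 c) (α : R) :
    IsExactWeight x φ μ (w - α • c) := fun j =>
  calc ∑ k, (w k - α * c k) * φ j (x k)
      = ∑ k, w k * φ j (x k) - α * ∑ k, c k * φ j (x k) := by
        simp only [sub_mul, mul_assoc, Finset.sum_sub_distrib, Finset.mul_sum]
    _ = μ j := by rw [hw j, hc j, Pi.zero_apply, mul_zero, sub_zero]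

section Ratio

variable {K ι : Type*} [Field K] [LinearOrder K] [IsStrictOrderedRing K] {w c : ι → K}

theorem sub_smul_nonneg_iff_div_bounds {α : K} :
    0 ≤ w - α • c ↔ (∀ k, c k < 0 → w k / c k ≤ α) ∧ (∀ k, c k = 0 → 0 ≤ w k) ∧
      ∀ k, 0 < c k → α ≤ w k / c k := by
  have nonneg_iff (k : ι) : 0 ≤ (w - α • c) k ↔ α * c k ≤ w k := sub_nonneg
  simp only [Pi.le_def, Pi.zero_apply, nonneg_iff]
  constructor
  · intro h
    exact ⟨fun k hk => (div_le_iff_of_neg hk).2 (h k),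
      fun k hk => by simpa only [hk, mul_zero] using h k,
      fun k hk => (le_div_iff₀ hk).2 (h k)⟩
  · rintro ⟨lower, zero, upper⟩ k
    rcases lt_trichotomy (c k) 0 with hk | hk | hk
    · exact (div_le_iff_of_neg hk).1 (lower k hk)
    · simpa only [hk, mul_zero] using zero k hk
    · exact (le_div_iff₀ hk).1 (upper k hk)

variable [Finite ι]

theorem exists_sub_smul_nonneg_and_apply_eq_zero_of_exists_pos
    (hpos : ∃ k, 0 < c k) (hw0 : ∀ k, c k = 0 → 0 ≤ w k)
    (h : ∀ i k, c i < 0 → 0 < c k → w i / c i ≤ w k / c k) :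
    ∃ (α : K) (k₀ : ι), 0 ≤ w - α • c ∧ (w - α • c) k₀ = 0 := by
  obtain ⟨k₀, hk₀, hmin⟩ :=
    Set.exists_min_image {k | 0 < c k} (fun k => w k / c k) (Set.toFinite _) hpos
  refine ⟨w k₀ / c k₀, k₀, ?_, sub_eq_zero.2 (div_mul_cancel₀ _ (ne_of_gt hk₀)).symm⟩
  exact sub_smul_nonneg_iff_div_bounds.2 ⟨fun i hi => h i k₀ hi hk₀, hw0, hmin⟩

theorem exists_sub_smul_nonneg_and_apply_eq_zero
    (hc0 : c ≠ 0) (hw0 : ∀ k, c k = 0 → 0 ≤ w k)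
    (h : ∀ i k, c i < 0 → 0 < c k → w i / c i ≤ w k / c k) :
    ∃ (α : K) (k₀ : ι), 0 ≤ w - α • c ∧ (w - α • c) k₀ = 0 := by
  obtain ⟨k, hk⟩ := Function.ne_iff.1 hc0
  rcases lt_or_gt_of_ne hk with hneg | hpos
  · -- Replacing `c` by `-c` negates all ratios and exchanges the two sides of the interval.
    obtain ⟨α, k₀, hnonneg, hzero⟩ :=
      exists_sub_smul_nonneg_and_apply_eq_zero_of_exists_pos (w := w) (c := -c)
        ⟨k, neg_pos.2 hneg⟩ (fun k hk => hw0 k (neg_eq_zero.1 hk)) fun i k hi hk => by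
          simpa only [Pi.neg_apply, div_neg, neg_le_neg_iff] using
            h k i (neg_pos.1 hk) (neg_lt_zero.1 hi)
    rw [smul_neg, ← neg_smul] at hnonneg hzero
    exact ⟨-α, k₀, hnonneg, hzero⟩
  · exact exists_sub_smul_nonneg_and_apply_eq_zero_of_exists_pos ⟨k, hpos⟩ hw0 h

end Ratio

theorem negative_weight_removal_general {K Ω ι J : Type*}
    [Field K] [LinearOrder K] [IsStrictOrderedRing K] [Fintype ι]
    {x : ι → Ω} {φ : J → Ω → K} {μ : J → K} {w c : ι → K}
    (hw : IsExactWeight x φ μ w) (hc : IsExactWeight x φ 0 c) (hc0 : c ≠ 0)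
    (hw0 : ∀ k, c k = 0 → 0 ≤ w k)
    (h : ∀ i k, c i < 0 → 0 < c k → w i / c i ≤ w k / c k) :
    ∃ (α : K) (k₀ : ι), 0 ≤ w - α • c ∧ (w - α • c) k₀ = 0 ∧
      IsExactWeight x φ μ (w - α • c) := by
  obtain ⟨α, k₀, hnonneg, hzero⟩ := exists_sub_smul_nonneg_and_apply_eq_zero hc0 hw0 h
  exact ⟨α, k₀, hnonneg, hzero, hw.sub_smul hc α⟩

/-- Implication (1 ⇒ 2) of Lemma 3.2 (negative weight removal): if
`α_min = max { w k / c k : c k < 0 } ≤ α_max = min { w k / c k : c k > 0 }`, then some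
`α` and some index `k₀` give a nonnegative exact weight vector `w - α c` vanishing
at `k₀`. -/
theorem negative_weight_removal {Ω : Type*} {N : ℕ}
    (x : Fin (N + 1) → Ω) (φ : Fin N → Ω → ℝ) (μ : Fin N → ℝ)
    (w c : Fin (N + 1) → ℝ)
    (hw : ∀ j, ∑ k, w k * φ j (x k) = μ j)
    (hc : ∀ j, ∑ k, c k * φ j (x k) = 0)
    (hpos : (Finset.univ.filter fun k => 0 < c k).Nonempty)
    (hneg : (Finset.univ.filter fun k => c k < 0).Nonempty)
    (hw0 : ∀ k, c k = 0 → 0 ≤ w k)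
    (h : (Finset.univ.filter fun k => c k < 0).sup' hneg (fun k => w k / c k)
        ≤ (Finset.univ.filter fun k => 0 < c k).inf' hpos (fun k => w k / c k)) :
    ∃ (α : ℝ) (k₀ : Fin (N + 1)), (∀ k, 0 ≤ w k - α * c k) ∧ w k₀ - α * c k₀ = 0 ∧
      ∀ j, ∑ k, (w k - α * c k) * φ j (x k) = μ j := by
  have ratio_le (i k) (hi : c i < 0) (hk : 0 < c k) : w i / c i ≤ w k / c k :=
    (Finset.le_sup' (fun k => w k / c k) ((Finset.mem_filter_univ i).2 hi)).trans <|
      h.trans <| Finset.inf'_le _ ((Finset.mem_filter_univ k).2 hk)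
  obtain ⟨k, hk⟩ := hpos
  have hc0 : c ≠ 0 := Function.ne_iff.2 ⟨k, ((Finset.mem_filter_univ k).1 hk).ne'⟩
  exact negative_weight_removal_general hw hc hc0 hw0 ratio_le
end

section
/- Let x_0,…,x_N be points of a set Ω, φ_0,…,φ_{N−1} : Ω → ℝ, μ_0,…,μ_{N−1} ∈ ℝ, and let w ∈ ℝ^{N+1} satisfy Σ_{k=0}^N w_k φ_j(x_k) = μ_j for j ≤ N−1. Let c ∈ ℝ^{N+1} satisfy Σ_{k=0}^N c_k φ_j(x_k) = 0 for j ≤ N−1, and assume: (a) every w'' ∈ ℝ^{N+1} with Σ_k w''_k φ_j(x_k) = μ_j for all j ≤ N−1 is of the form w'' = w − α c for some α ∈ ℝ; (b) {k : c_k > 0} and {k : c_k < 0} are nonempty; setting α_min = max{ w_k / c_k : c_k < 0 } and α_max = min{ w_k / c_k : c_k > 0 }, assume α_min < α_max; (c) there is a unique index k_max with c_{k_max} > 0 and w_{k_max}/c_{k_max} = α_max and a unique index k_min with c_{k_min} < 0 and w_{k_min}/c_{k_min} = α_min; (d) w_k > 0 for every k with c_k = 0. Then an index k_0 admits a vector w'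 ∈ ℝ^{N+1} with w'_k ≥ 0 for all k, w'_{k_0} = 0, and Σ_k w'_k φ_j(x_k) = μ_j for all j ≤ N−1, if and only if k_0 = k_min or k_0 = k_max. -/
/-!
The exact weight vectors form the line `α ↦ w - α • c`, and such a vector is nonnegative iff
`αmin ≤ α ≤ αmax`. Its entry at a node `k` with `c k ≠ 0` vanishes iff `α = w k / c k`. These
ratios are at most `αmin` where `c k < 0` and at least `αmax` where `0 < c k`, so a nonnegative
exact vector can vanish only at a node whose ratio is extremal.
-/

section Line

variable {ι K : Type*} [Field K] {w c : ι → K} {α αmin αmax : K} {k : ι}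

theorem sub_smul_apply_eq_zero_iff (hk : c k ≠ 0) :
    (w - α • c) k = 0 ↔ w k / c k = α := by
  rw [Pi.sub_apply, Pi.smul_apply, smul_eq_mul, sub_eq_zero, div_eq_iff hk]

variable [LinearOrder K]

/-- The ratios `w k / c k` over the nodes with `c k < 0`. These are the lower bounds which
nonnegativity of `w - α • c` imposes on `α`. -/
def negRatios (w c : ι → K) : Set K :=
  (fun k ↦ w k / c k) '' {k | c k < 0}

/-- The ratios `w k / c k` over the nodes with `0 < c k`. These are the upper bounds which
nonnegativity of `w - α • c` imposes on `α`. -/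
def posRatios (w c : ι → K) : Set K :=
  (fun k ↦ w k / c k) '' {k | 0 < c k}

variable [IsStrictOrderedRing K]

theorem nonneg_sub_smul_iff_mem_bounds (hzero : ∀ k, c k = 0 → 0 ≤ w k) :
    (∀ k, 0 ≤ (w - α • c) k) ↔
      α ∈ upperBounds (negRatios w c) ∧ α ∈ lowerBounds (posRatios w c) := by
  simp only [negRatios, posRatios, mem_upperBounds, mem_lowerBounds, Set.forall_mem_image,
    Set.mem_ofPred_eq, Pi.sub_apply, Pi.smul_apply, smul_eq_mul, sub_nonneg]
  constructor
  · exact fun h ↦ ⟨fun k hk ↦ (div_le_iff_of_neg hk).2 (h k),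
      fun k hk ↦ (le_div_iff₀ hk).2 (h k)⟩
  · rintro ⟨hneg, hpos⟩ k
    rcases lt_trichotomy (c k) 0 with hk | hk | hk
    · exact (div_le_iff_of_neg hk).1 (hneg hk)
    · simpa only [hk, mul_zero] using hzero k hk
    · exact (le_div_iff₀ hk).1 (hpos hk)

theorem nonneg_sub_smul_iff_mem_Icc (hzero : ∀ k, c k = 0 → 0 ≤ w k)
    (hmin : IsGreatest (negRatios w c) αmin) (hmax : IsLeast (posRatios w c) αmax) :
    (∀ k, 0 ≤ (w - α • c) k) ↔ α ∈ Set.Icc αmin αmax := by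
  rw [nonneg_sub_smul_iff_mem_bounds hzero, hmin.upperBounds_eq, hmax.lowerBounds_eq,
    Set.mem_Ici, Set.mem_Iic, Set.mem_Icc]

theorem exists_nonneg_sub_smul_apply_eq_zero_iff (hzero : ∀ k, c k = 0 → 0 < w k)
    (hmin : IsGreatest (negRatios w c) αmin) (hmax : IsLeast (posRatios w c) αmax)
    (hle : αmin ≤ αmax) :
    (∃ α : K, (∀ i, 0 ≤ (w - α • c) i) ∧ (w - α • c) k = 0) ↔
      (c k < 0 ∧ w k / c k = αmin) ∨ (0 < c k ∧ w k / c k = αmax) := by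
  simp only [nonneg_sub_smul_iff_mem_Icc (fun i hi ↦ (hzero i hi).le) hmin hmax]
  constructor
  · rintro ⟨α, ⟨hminα, hαmax⟩, hα⟩
    rcases lt_trichotomy (c k) 0 with hk | hk | hk
    · obtain rfl := (sub_smul_apply_eq_zero_iff hk.ne).1 hα
      exact .inl ⟨hk, (hmin.2 (Set.mem_image_of_mem _ hk)).antisymm hminα⟩
    · have hwk : w k = 0 := by simpa [hk] using hα
      exact absurd hwk (hzero k hk).ne'
    · obtain rfl := (sub_smul_apply_eq_zero_iff hk.ne').1 hα
      exact .inr ⟨hk, hαmax.antisymm (hmax.2 (Set.mem_image_of_mem _ hk))⟩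
  · rintro (⟨hk, hα⟩ | ⟨hk, hα⟩)
    · exact ⟨αmin, Set.left_mem_Icc.2 hle, (sub_smul_apply_eq_zero_iff hk.ne).2 hα⟩
    · exact ⟨αmax, Set.right_mem_Icc.2 hle, (sub_smul_apply_eq_zero_iff hk.ne').2 hα⟩

end Line

section Quadrature

variable {Ω ι J K M : Type*} [Fintype ι] [Field K] [AddCommGroup M] [Module K M]
  {x : ι → Ω} {φ : J → Ω → M} {μ : J → M} {w c : ι → K} {αmin αmax : K}

/-- The weights `w` at the nodes `x` reproduce the moments `μ` of the basis functions `φ`. The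
basis functions take values in a module, so that complex-valued ones with real weights are
covered. Taking `μ = 0` expresses that `w` lies in the null space of the Vandermonde matrix. -/
def IsExact (x : ι → Ω) (φ : J → Ω → M) (μ : J → M) (w : ι → K) : Prop :=
  ∀ j, ∑ k, w k • φ j (x k) = μ j

theorem IsExact.sub_smul (hw : IsExact x φ μ w) (hc : IsExact x φ 0 c) (α : K) :
    IsExact x φ μ (w - α • c) := fun j ↦
  calc ∑ k, (w - α • c) k • φ j (x k)
      = ∑ k, w k • φ j (x k) - α • ∑ k, c k • φ j (x k) := by
        simp only [Pi.sub_apply, Pi.smul_apply, _root_.sub_smul, smul_assoc,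
          Finset.sum_sub_distrib, Finset.smul_sum]
    _ = μ j := by rw [hw j, hc j, Pi.zero_apply, smul_zero, sub_zero]

/-- The node `x k₀` can be removed from the quadrature rule: some nonnegative exact weights
vanish there. The removed node is encoded by a zero weight rather than by a smaller index type;
the field `K` of weights is explicit because the moments do not determine it. -/
def IsRemovableNode (K : Type*) [Field K] [LE K] [Module K M] (x : ι → Ω) (φ : J → Ω → M)
    (μ : J → M) (k₀ : ι) : Prop :=
  ∃ w' : ι → K, (∀ k, 0 ≤ w' k) ∧ w' k₀ = 0 ∧ IsExact x φ μ w'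

theorem exactly_two_removable_nodes_general [LinearOrder K] [IsStrictOrderedRing K]
    (hw : IsExact x φ μ w) (hc : IsExact x φ 0 c)
    (hline : ∀ w' : ι → K, IsExact x φ μ w' → ∃ α : K, w' = w - α • c)
    (hmin : IsGreatest (negRatios w c) αmin) (hmax : IsLeast (posRatios w c) αmax)
    (hle : αmin ≤ αmax) (hzero : ∀ k, c k = 0 → 0 < w k) (k₀ : ι) :
    IsRemovableNode K x φ μ k₀ ↔
      (c k₀ < 0 ∧ w k₀ / c k₀ = αmin) ∨ (0 < c k₀ ∧ w k₀ / c k₀ = αmax) := by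
  rw [← exists_nonneg_sub_smul_apply_eq_zero_iff hzero hmin hmax hle]
  constructor
  · rintro ⟨w', hnonneg, hvanish, hexact⟩
    obtain ⟨α, rfl⟩ := hline w' hexact
    exact ⟨α, hnonneg, hvanish⟩
  · rintro ⟨α, hnonneg, hvanish⟩
    exact ⟨w - α • c, hnonneg, hvanish, hw.sub_smul hc α⟩

end Quadrature

section ExtremalRatios

variable {ι K : Type*} [Fintype ι] [Field K] [LinearOrder K] {w c : ι → K}

theorem isGreatest_negRatios_sup' (h : (Finset.univ.filter fun k ↦ c k < 0).Nonempty) :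
    IsGreatest (negRatios w c)
      ((Finset.univ.filter fun k ↦ c k < 0).sup' h fun k ↦ w k / c k) := by
  rw [negRatios, ← Finset.coe_filter_univ]
  refine ⟨?_, Set.forall_mem_image.2 fun k hk ↦ Finset.le_sup' (fun k ↦ w k / c k) hk⟩
  obtain ⟨k, hk, hsup⟩ := Finset.exists_mem_eq_sup' h fun k ↦ w k / c k
  exact ⟨k, hk, hsup.symm⟩

theorem isLeast_posRatios_inf' (h : (Finset.univ.filter fun k ↦ 0 < c k).Nonempty) :
    IsLeast (posRatios w c)
      ((Finset.univ.filter fun k ↦ 0 < c k).inf' h fun k ↦ w k / c k) := by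
  rw [posRatios, ← Finset.coe_filter_univ]
  refine ⟨?_, Set.forall_mem_image.2 fun k hk ↦ Finset.inf'_le (fun k ↦ w k / c k) hk⟩
  obtain ⟨k, hk, hinf⟩ := Finset.exists_mem_eq_inf' h fun k ↦ w k / c k
  exact ⟨k, hk, hinf.symm⟩

end ExtremalRatios

/-- Exactly two nodes can be removed (claim following Lemma 3.2): if every exact weight
vector is of the form `w - α • c`, if `α_min < α_max` with uniquely attained extremal
ratios at `kmin` and `kmax`, and if `w k > 0` whenever `c k = 0`, then an index `k₀`
admits a nonnegative exact weight vector vanishing at `k₀` iff `k₀ = kmin` or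
`k₀ = kmax`. -/
theorem exactly_two_removable_nodes {Ω : Type*} {N : ℕ}
    (x : Fin (N + 1) → Ω) (φ : Fin N → Ω → ℝ) (μ : Fin N → ℝ)
    (w c : Fin (N + 1) → ℝ)
    (hw : ∀ j, ∑ k, w k * φ j (x k) = μ j)
    (hc : ∀ j, ∑ k, c k * φ j (x k) = 0)
    (ha : ∀ w'' : Fin (N + 1) → ℝ, (∀ j, ∑ k, w'' k * φ j (x k) = μ j) →
      ∃ α : ℝ, w'' = w - α • c)
    (hpos : (Finset.univ.filter fun k => 0 < c k).Nonempty)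
    (hneg : (Finset.univ.filter fun k => c k < 0).Nonempty)
    (αmin αmax : ℝ)
    (hαmin : αmin = (Finset.univ.filter fun k => c k < 0).sup' hneg fun k => w k / c k)
    (hαmax : αmax = (Finset.univ.filter fun k => 0 < c k).inf' hpos fun k => w k / c k)
    (hlt : αmin < αmax)
    (kmin kmax : Fin (N + 1))
    (hkmax : 0 < c kmax ∧ w kmax / c kmax = αmax)
    (hkmaxu : ∀ k, 0 < c k → w k / c k = αmax → k = kmax)
    (hkmin : c kmin < 0 ∧ w kmin / c kmin = αmin)
    (hkminu : ∀ k, c k < 0 → w k / c k = αmin → k = kmin)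
    (hd : ∀ k, c k = 0 → 0 < w k) :
    ∀ k₀, (∃ w' : Fin (N + 1) → ℝ, (∀ k, 0 ≤ w' k) ∧ w' k₀ = 0 ∧
        ∀ j, ∑ k, w' k * φ j (x k) = μ j) ↔ (k₀ = kmin ∨ k₀ = kmax) := by
  intro k₀
  have hexact : IsExact x φ μ w := hw
  have hnull : IsExact x φ 0 c := hc
  have hmin : IsGreatest (negRatios w c) αmin := hαmin ▸ isGreatest_negRatios_sup' hneg
  have hmax : IsLeast (posRatios w c) αmax := hαmax ▸ isLeast_posRatios_inf' hpos
  exact (exactly_two_removable_nodes_general hexact hnull ha hmin hmax hlt.le hd k₀).trans <|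
    or_congr ⟨fun h ↦ hkminu k₀ h.1 h.2, fun h ↦ h ▸ hkmin⟩
      ⟨fun h ↦ hkmaxu k₀ h.1 h.2, fun h ↦ h ▸ hkmax⟩
end

section
/- Let Ω be a set, let X_0 ⊆ Ω be a finite set of prescribed nodes, let Y ⊆ Ω be a nonempty finite sample set, and let φ_0,…,φ_D : Ω → ℝ. Then there exist a subset S ⊆ Y with |S| ≤ D + 1 and a function w : X_0 ∪ S → ℝ with w(x) ≥ 0 for all x, such that Σ_{x ∈ X_0 ∪ S} w(x) φ_j(x) = (1/|Y|) Σ_{y∈Y} φ_j(y) for every j = 0,…,D. In particular, a positive quadrature rule exact for all D+1 sample moments whose node set contains X_0 can be obtained by adding at most M ≤ D + 1 nodes to X_0. -/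
/-!
The sample moment vector is a conic combination of the vectors `(φ j y)_j`, `y ∈ Y`. As long as
these are linearly dependent, subtracting from the weights the largest admissible multiple of a
linear relation makes one weight vanish and keeps the others nonnegative, so a node can be dropped.
What remains is a set `S ⊆ Y` of nodes with linearly independent vectors, hence no larger than the
number of moments; the prescribed nodes outside `S` receive weight zero.
-/

section ConicCaratheodory

variable {ι 𝕜 E : Type*} [Field 𝕜] [LinearOrder 𝕜] [IsStrictOrderedRing 𝕜]
  [AddCommGroup E] [Module 𝕜 E]

lemma exists_mul_le_and_mul_eq {T : Finset ι} {w g : ι → 𝕜}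
    (hw : ∀ i ∈ T, 0 ≤ w i) (hg : ∃ i ∈ T, 0 < g i) :
    ∃ c, (∀ i ∈ T, c * g i ≤ w i) ∧ ∃ i ∈ T, c * g i = w i := by
  obtain ⟨p, hp, hmin⟩ := (T.filter (0 < g ·)).exists_min_image (fun i ↦ w i / g i)
    (by simpa only [Finset.filter_nonempty_iff] using hg)
  simp only [Finset.mem_filter, and_imp] at hp hmin
  obtain ⟨hpT, hgp⟩ := hp
  refine ⟨w p / g p, fun i hi ↦ ?_, p, hpT, div_mul_cancel₀ _ hgp.ne'⟩
  rcases lt_or_ge 0 (g i) with hgi | hgi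
  · exact (le_div_iff₀ hgi).mp (hmin i hi hgi)
  · exact (mul_nonpos_of_nonneg_of_nonpos (div_nonneg (hw p hpT) hgp.le) hgi).trans (hw i hi)

lemma exists_sum_smul_eq_zero_and_pos {v : ι → E} {T : Finset ι}
    (hT : ¬ LinearIndepOn 𝕜 v T) :
    ∃ g : ι → 𝕜, ∑ i ∈ T, g i • v i = 0 ∧ ∃ i ∈ T, 0 < g i := by
  simp only [linearIndepOn_finset_iff, not_forall] at hT
  obtain ⟨g, hg, i, hi, hgi⟩ := hT
  rcases lt_or_gt_of_ne hgi with hneg | hpos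
  · exact ⟨-g, by simp [hg], i, hi, by simpa using hneg⟩
  · exact ⟨g, hg, i, hi, hpos⟩

lemma exists_erase_nonneg_sum_smul_eq [DecidableEq ι] {v : ι → E} {T : Finset ι} {w : ι → 𝕜}
    (hw : ∀ i ∈ T, 0 ≤ w i) (hT : ¬ LinearIndepOn 𝕜 v T) :
    ∃ p ∈ T, ∃ w' : ι → 𝕜, (∀ i ∈ T.erase p, 0 ≤ w' i) ∧
      ∑ i ∈ T.erase p, w' i • v i = ∑ i ∈ T, w i • v i := by
  obtain ⟨g, hg, hpos⟩ := exists_sum_smul_eq_zero_and_pos hT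
  obtain ⟨c, hle, p, hp, heq⟩ := exists_mul_le_and_mul_eq hw hpos
  refine ⟨p, hp, fun i ↦ w i - c * g i,
    fun i hi ↦ sub_nonneg.mpr (hle i (Finset.mem_of_mem_erase hi)), ?_⟩
  calc ∑ i ∈ T.erase p, (w i - c * g i) • v i
      = ∑ i ∈ T, (w i - c * g i) • v i :=
        Finset.sum_erase T (by rw [heq, sub_self, zero_smul])
    _ = ∑ i ∈ T, w i • v i - c • ∑ i ∈ T, g i • v i := by
        simp only [sub_smul, mul_smul, Finset.sum_sub_distrib, Finset.smul_sum]
    _ = ∑ i ∈ T, w i • v i := by rw [hg, smul_zero, sub_zero]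

theorem exists_linearIndepOn_nonneg_sum_smul_eq (v : ι → E) {T : Finset ι} {w : ι → 𝕜}
    (hw : ∀ i ∈ T, 0 ≤ w i) :
    ∃ S ⊆ T, LinearIndepOn 𝕜 v S ∧ ∃ w' : ι → 𝕜, (∀ i ∈ S, 0 ≤ w' i) ∧
      ∑ i ∈ S, w' i • v i = ∑ i ∈ T, w i • v i := by
  classical
  induction T using Finset.strongInduction generalizing w with
  | H T ih =>
    by_cases hT : LinearIndepOn 𝕜 v T
    · exact ⟨T, subset_rfl, hT, w, hw, rfl⟩
    obtain ⟨p, hp, w₁, hw₁, hsum₁⟩ := exists_erase_nonneg_sum_smul_eq hw hT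
    obtain ⟨S, hS, hli, w₂, hw₂, hsum₂⟩ := ih (T.erase p) (Finset.erase_ssubset hp) hw₁
    exact ⟨S, hS.trans (T.erase_subset p), hli, w₂, hw₂, hsum₂.trans hsum₁⟩

end ConicCaratheodory

theorem nested_rule_node_bound_general {Ω ι 𝕜 : Type*} [DecidableEq Ω] [Fintype ι]
    [Field 𝕜] [LinearOrder 𝕜] [IsStrictOrderedRing 𝕜]
    (X₀ Y : Finset Ω) {u : Ω → 𝕜} (hu : ∀ y ∈ Y, 0 ≤ u y) (φ : ι → Ω → 𝕜) :
    ∃ S : Finset Ω, S ⊆ Y ∧ S.card ≤ Fintype.card ι ∧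
      ∃ w : Ω → 𝕜, (∀ p ∈ X₀ ∪ S, 0 ≤ w p) ∧
        ∀ j, ∑ p ∈ X₀ ∪ S, w p * φ j p = ∑ y ∈ Y, u y * φ j y := by
  obtain ⟨S, hS, hli, w, hw, hsum⟩ :=
    exists_linearIndepOn_nonneg_sum_smul_eq (fun p j ↦ φ j p) hu
  have hcard : S.card ≤ Fintype.card ι := by
    simpa using hli.linearIndependent.fintype_card_le_finrank
  refine ⟨S, hS, hcard, fun p ↦ if p ∈ S then w p else 0, fun p _ ↦ ?_, fun j ↦ ?_⟩
  · dsimp only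
    split_ifs with hp
    exacts [hw p hp, le_rfl]
  · calc ∑ p ∈ X₀ ∪ S, (if p ∈ S then w p else 0) * φ j p
        = ∑ p ∈ S, w p * φ j p := by
          simp only [ite_mul, zero_mul, Finset.sum_ite_mem, Finset.union_inter_cancel_right]
      _ = ∑ y ∈ Y, u y * φ j y := by
          simpa only [Finset.sum_apply, Pi.smul_apply, smul_eq_mul] using congrFun hsum j

/-- Nested implicit quadrature rule bound: given prescribed nodes `X₀`, a nonempty finite
sample set `Y` and functions `φ 0, …, φ D`, one can add at most `D + 1` nodes taken from
`Y` to `X₀` and find nonnegative weights on the extended node set reproducing all `D + 1`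
sample moments exactly. -/
theorem nested_rule_node_bound {Ω : Type*} [DecidableEq Ω]
    (X₀ : Finset Ω) (Y : Finset Ω) (hY : Y.Nonempty)
    {D : ℕ} (φ : Fin (D + 1) → Ω → ℝ) :
    ∃ S : Finset Ω, S ⊆ Y ∧ S.card ≤ D + 1 ∧
      ∃ w : Ω → ℝ, (∀ p ∈ X₀ ∪ S, 0 ≤ w p) ∧
        ∀ j, ∑ p ∈ X₀ ∪ S, w p * φ j p = (1 / (Y.card : ℝ)) * ∑ y ∈ Y, φ j y := by
  simpa only [Fintype.card_fin, Finset.mul_sum] using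
    nested_rule_node_bound_general X₀ Y (u := fun _ ↦ 1 / (Y.card : ℝ)) (by intros; positivity) φ
end
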